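/- Let γ(t) = (t,t²,t³) and let T : ℝ³ → ℝ³ be the linear map T(x,y,z) = (y/2, (x − z/6)/√2, (x + z/6)/√2). Let t ∈ [0,1] and define ω ∈ [π/4, π/2] by (cos ω, sin ω) = (2√2 t/(2 + t²), (2 − t²)/(2 + t²)), and set u = (cos ω, sin ω, 1), v = (sin ω, −cos ω, 0), w = (cos ω, sin ω, −1). Then for all 0 < a ≤ b and B₀, C₀ > 0 with B₀ + C₀ ≤ a/8, the image under T of the set {A γ'(t) + B γ''(t) + C γ'''(t) : a ≤ |A| ≤ b, |B| ≤ B₀, |C| ≤ C₀} is contained in {A' u + B' v + C' w : a/2 ≤ |A'| ≤ 2b, |B'| ≤ B₀ + C₀, |C'| ≤ C₀}. -/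

import Mathlib

open Real Set

noncomputable section

/-- `γ'(t) = (1, 2t, 3t²)`. -/
def momD1 (t : ℝ) : Fin 3 → ℝ := ![1, 2*t, 3*t^2]

/-- `γ''(t) = (0, 2, 6t)`. -/
def momD2 (t : ℝ) : Fin 3 → ℝ := ![0, 2, 6*t]

/-- `γ'''(t) = (0, 0, 6)`. -/
def momD3 : Fin 3 → ℝ := ![0, 0, 6]

/-- The linear map `T(x,y,z) = (y/2, (x − z/6)/√2, (x + z/6)/√2)`. -/
def Tmap (x : Fin 3 → ℝ) : Fin 3 → ℝ :=
  ![x 1 / 2, (x 0 - x 2 / 6) / Real.sqrt 2, (x 0 + x 2 / 6) / Real.sqrt 2]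

/-! Write `λ = (2 + t²) / (2√2)`, so that `T γ'(t) = λ u`. Differentiating this in `t`, with
`λ' = t / √2`, `λ'' = 1 / √2` and `ω' = -1 / λ`, and using `du/dω = -v` and `dv/dω = (u + w) / 2`,
gives `T γ''(t) = λ' u + v` and `T γ'''(t) = (λ'' - 1 / (2λ)) u + (λ' / λ) v - (1 / (2λ)) w`.
The change of frame is therefore triangular, and the new box is read off from its coefficients. -/

section FrameBox

variable {𝕜 E F : Type*} [CommRing 𝕜] [LinearOrder 𝕜]
  [AddCommGroup E] [Module 𝕜 E] [AddCommGroup F] [Module 𝕜 F]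

/-- The box of vectors `A e₁ + B e₂ + C e₃` in the frame `(e₁, e₂, e₃)` whose leading coefficient
satisfies `a ≤ |A| ≤ b` and whose other two satisfy `|B| ≤ B₀` and `|C| ≤ C₀`. The vectors are not
assumed to be independent. -/
def frameBox (e₁ e₂ e₃ : E) (a b B₀ C₀ : 𝕜) : Set E :=
  {ξ | ∃ A B C : 𝕜, a ≤ |A| ∧ |A| ≤ b ∧ |B| ≤ B₀ ∧ |C| ≤ C₀ ∧ ξ = A • e₁ + B • e₂ + C • e₃}

theorem frameBox_mono {e₁ e₂ e₃ : E} {a a' b b' B₀ B₀' C₀ C₀' : 𝕜}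
    (ha : a' ≤ a) (hb : b ≤ b') (hB : B₀ ≤ B₀') (hC : C₀ ≤ C₀') :
    frameBox e₁ e₂ e₃ a b B₀ C₀ ⊆ frameBox e₁ e₂ e₃ a' b' B₀' C₀' := by
  rintro ξ ⟨A, B, C, haA, hAb, hBB, hCC, hξ⟩
  exact ⟨A, B, C, ha.trans haA, hAb.trans hb, hBB.trans hB, hCC.trans hC, hξ⟩

variable [IsStrictOrderedRing 𝕜]

theorem abs_mul_add_mul_le {p q x y X Y : 𝕜} (hx : |x| ≤ X) (hy : |y| ≤ Y) :
    |p * x + q * y| ≤ |p| * X + |q| * Y :=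
  calc |p * x + q * y| ≤ |p * x| + |q * y| := abs_add_le _ _
    _ = |p| * |x| + |q| * |y| := by rw [abs_mul, abs_mul]
    _ ≤ |p| * X + |q| * Y := by gcongr

theorem image_frameBox_subset_of_triangular {T : E → F} (hT : IsLinearMap 𝕜 T)
    {e₁ e₂ e₃ : E} {u v w : F} {l₁ l₂ l₃ m₂ m₃ n₃ : 𝕜} (h₁ : T e₁ = l₁ • u)
    (h₂ : T e₂ = l₂ • u + m₂ • v) (h₃ : T e₃ = l₃ • u + m₃ • v + n₃ • w) (a b B₀ C₀ : 𝕜) :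
    T '' frameBox e₁ e₂ e₃ a b B₀ C₀ ⊆
      frameBox u v w (|l₁| * a - (|l₂| * B₀ + |l₃| * C₀)) (|l₁| * b + (|l₂| * B₀ + |l₃| * C₀))
        (|m₂| * B₀ + |m₃| * C₀) (|n₃| * C₀) := by
  rintro _ ⟨_, ⟨A, B, C, haA, hAb, hB, hC, rfl⟩, rfl⟩
  have herror : |l₂ * B + l₃ * C| ≤ |l₂| * B₀ + |l₃| * C₀ := abs_mul_add_mul_le hB hC
  refine ⟨l₁ * A + (l₂ * B + l₃ * C), m₂ * B + m₃ * C, n₃ * C, ?_, ?_,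
    abs_mul_add_mul_le hB hC, ?_, ?_⟩
  · calc |l₁| * a - (|l₂| * B₀ + |l₃| * C₀)
        ≤ |l₁| * |A| - |l₂ * B + l₃ * C| := by gcongr
      _ = |l₁ * A| - |l₂ * B + l₃ * C| := by rw [abs_mul]
      _ ≤ |l₁ * A + (l₂ * B + l₃ * C)| := abs_sub_abs_le_abs_add _ _
  · calc |l₁ * A + (l₂ * B + l₃ * C)|
        ≤ |l₁ * A| + |l₂ * B + l₃ * C| := abs_add_le _ _
      _ = |l₁| * |A| + |l₂ * B + l₃ * C| := by rw [abs_mul]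
      _ ≤ |l₁| * b + (|l₂| * B₀ + |l₃| * C₀) := by gcongr
  · rw [abs_mul]
    gcongr
  · simp only [hT.map_add, hT.map_smul, h₁, h₂, h₃]
    module

end FrameBox

/-- The null direction `u` of the cone frame at angle `ω`. -/
def coneU (ω : ℝ) : Fin 3 → ℝ := ![cos ω, sin ω, 1]

/-- The angular direction `v` of the cone frame at angle `ω`, oriented so that `v = -du/dω`. -/
def coneV (ω : ℝ) : Fin 3 → ℝ := ![sin ω, -cos ω, 0]

/-- The transverse null direction `w` of the cone frame at angle `ω`. -/
def coneW (ω : ℝ) : Fin 3 → ℝ := ![cos ω, sin ω, -1]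

/-- The factor `λ` with `T γ'(t) = λ u`. -/
def coneScale (t : ℝ) : ℝ := (2 + t ^ 2) / (2 * √2)

/-- The bound for the `u`-coefficient of `T (B γ''(t) + C γ'''(t))` over `|B| ≤ B₀` and
`|C| ≤ C₀`. -/
def coneError (t B₀ C₀ : ℝ) : ℝ := |t| / √2 * B₀ + (1 / √2 - 1 / (2 * coneScale t)) * C₀

section Scale

variable (t : ℝ)

theorem coneScale_pos : 0 < coneScale t := by
  unfold coneScale
  positivity

theorem sqrt_two_mul_coneScale : √2 * coneScale t = (2 + t ^ 2) / 2 := by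
  unfold coneScale
  field_simp

theorem one_le_sqrt_two_mul_coneScale : 1 ≤ √2 * coneScale t := by
  rw [sqrt_two_mul_coneScale]
  linarith [sq_nonneg t]

theorem one_div_sqrt_two_le_coneScale : 1 / √2 ≤ coneScale t :=
  (div_le_iff₀' (by positivity)).2 (one_le_sqrt_two_mul_coneScale t)

theorem one_div_two_mul_coneScale_le : 1 / (2 * coneScale t) ≤ 1 / √2 := by
  gcongr
  calc √2 ≤ √2 * (√2 * coneScale t) :=
        le_mul_of_one_le_right (by positivity) (one_le_sqrt_two_mul_coneScale t)
    _ = 2 * coneScale t := by rw [← mul_assoc, mul_self_sqrt zero_le_two]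

theorem abs_div_sqrt_two_mul_coneScale_le_one : |t| / (√2 * coneScale t) ≤ 1 := by
  rw [sqrt_two_mul_coneScale, div_le_one (by positivity), ← sq_abs]
  linarith [sq_nonneg (|t| - 1)]

end Scale

section FrameChange

variable {t ω : ℝ}

theorem isLinearMap_Tmap : IsLinearMap ℝ Tmap where
  map_add x y := by
    simp only [Tmap, Pi.add_apply, Matrix.vec3_add]
    apply Matrix.vec3_eq <;> ring
  map_smul c x := by
    simp only [Tmap, Pi.smul_apply, Matrix.smul_vec3, smul_eq_mul]
    apply Matrix.vec3_eq <;> ring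

theorem Tmap_momD1 (hcos : cos ω = 2 * √2 * t / (2 + t ^ 2))
    (hsin : sin ω = (2 - t ^ 2) / (2 + t ^ 2)) :
    Tmap (momD1 t) = coneScale t • coneU ω := by
  simp only [coneU, coneScale, Matrix.smul_vec3, smul_eq_mul, hcos, hsin]
  refine Matrix.vec3_eq ?_ ?_ ?_
  · change 2 * t / 2 = _
    field_simp
  · change (1 - 3 * t ^ 2 / 6) / √2 = _
    field_simp
    ring
  · change (1 + 3 * t ^ 2 / 6) / √2 = _
    field_simp
    ring

theorem Tmap_momD2 (hcos : cos ω = 2 * √2 * t / (2 + t ^ 2))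
    (hsin : sin ω = (2 - t ^ 2) / (2 + t ^ 2)) :
    Tmap (momD2 t) = (t / √2) • coneU ω + (1 : ℝ) • coneV ω := by
  simp only [coneU, coneV, Matrix.smul_vec3, Matrix.vec3_add, smul_eq_mul, hcos, hsin]
  refine Matrix.vec3_eq ?_ ?_ ?_
  · change 2 / 2 = _
    field_simp
    ring
  · change (0 - 6 * t / 6) / √2 = _
    field_simp
    rw [sq_sqrt zero_le_two]
    ring
  · change (0 + 6 * t / 6) / √2 = _
    ring

theorem Tmap_momD3 (hcos : cos ω = 2 * √2 * t / (2 + t ^ 2))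
    (hsin : sin ω = (2 - t ^ 2) / (2 + t ^ 2)) :
    Tmap momD3 = (1 / √2 - 1 / (2 * coneScale t)) • coneU ω +
      (t / (√2 * coneScale t)) • coneV ω + (-(1 / (2 * coneScale t))) • coneW ω := by
  simp only [coneU, coneV, coneW, coneScale, Matrix.smul_vec3, Matrix.vec3_add, smul_eq_mul,
    hcos, hsin]
  refine Matrix.vec3_eq ?_ ?_ ?_
  · change 0 / 2 = _
    field_simp
    rw [sq_sqrt zero_le_two]
    ring
  · change (0 - 6 / 6) / √2 = _
    field_simp
    rw [sq_sqrt zero_le_two]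
    ring
  · change (0 + 6 / 6) / √2 = _
    ring

theorem moment_frame_to_cone_frame_general (hcos : cos ω = 2 * √2 * t / (2 + t ^ 2))
    (hsin : sin ω = (2 - t ^ 2) / (2 + t ^ 2)) (a b B₀ C₀ : ℝ) :
    Tmap '' frameBox (momD1 t) (momD2 t) momD3 a b B₀ C₀ ⊆
      frameBox (coneU ω) (coneV ω) (coneW ω)
        (coneScale t * a - coneError t B₀ C₀) (coneScale t * b + coneError t B₀ C₀)
        (B₀ + |t| / (√2 * coneScale t) * C₀) (1 / (2 * coneScale t) * C₀) := by
  have hscale : 0 < coneScale t := coneScale_pos t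
  have hcoeff : 0 ≤ 1 / √2 - 1 / (2 * coneScale t) :=
    sub_nonneg.2 (one_div_two_mul_coneScale_le t)
  have himage := image_frameBox_subset_of_triangular isLinearMap_Tmap (Tmap_momD1 hcos hsin)
    (Tmap_momD2 hcos hsin) (Tmap_momD3 hcos hsin) a b B₀ C₀
  rwa [abs_neg, abs_of_pos hscale, abs_of_nonneg hcoeff, abs_div t, abs_div t, abs_one, one_mul,
    abs_of_pos (by positivity : 0 < √2), abs_of_pos (by positivity : 0 < √2 * coneScale t),
    abs_of_pos (by positivity : 0 < 1 / (2 * coneScale t))] at himage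

end FrameChange

section Estimates

variable {t a b B₀ C₀ : ℝ}

theorem one_div_sqrt_two_le_one : 1 / √2 ≤ 1 :=
  (div_le_one (by positivity)).2 (one_le_sqrt.2 one_le_two)

theorem coneScale_le (ht : |t| ≤ 1) : coneScale t ≤ 3 / 2 * (1 / √2) := by
  have htsq : t ^ 2 ≤ 1 := (sq_le_one_iff_abs_le_one t).2 ht
  calc coneScale t ≤ (2 + 1) / (2 * √2) := by unfold coneScale; gcongr
    _ = 3 / 2 * (1 / √2) := by ring

theorem coneError_le (ht : |t| ≤ 1) (hB₀ : 0 ≤ B₀) (hC₀ : 0 ≤ C₀) :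
    coneError t B₀ C₀ ≤ 1 / √2 * (B₀ + C₀) := by
  have hscale : 0 < coneScale t := coneScale_pos t
  have hcoeff : 1 / √2 - 1 / (2 * coneScale t) ≤ 1 / √2 := sub_le_self _ (by positivity)
  calc coneError t B₀ C₀ ≤ 1 / √2 * B₀ + 1 / √2 * C₀ := by unfold coneError; gcongr
    _ = 1 / √2 * (B₀ + C₀) := by ring

theorem half_le_coneScale_mul_sub_coneError (ht : |t| ≤ 1) (hB₀ : 0 ≤ B₀) (hC₀ : 0 ≤ C₀)
    (hsum : B₀ + C₀ ≤ a / 8) : a / 2 ≤ coneScale t * a - coneError t B₀ C₀ := by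
  have ha : 0 ≤ a := by linarith
  have hsqrt : √2 ≤ 7 / 4 := sqrt_le_iff.2 ⟨by norm_num, by norm_num⟩
  calc a / 2 = 1 / (7 / 4) * (7 / 8 * a) := by ring
    _ ≤ 1 / √2 * (7 / 8 * a) := by gcongr
    _ = 1 / √2 * a - 1 / √2 * (a / 8) := by ring
    _ ≤ 1 / √2 * a - 1 / √2 * (B₀ + C₀) := by gcongr
    _ ≤ coneScale t * a - coneError t B₀ C₀ := by
      gcongr
      exacts [one_div_sqrt_two_le_coneScale t, coneError_le ht hB₀ hC₀]

theorem coneScale_mul_add_coneError_le (ht : |t| ≤ 1) (hB₀ : 0 ≤ B₀) (hC₀ : 0 ≤ C₀)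
    (hsum : B₀ + C₀ ≤ b / 8) : coneScale t * b + coneError t B₀ C₀ ≤ 2 * b := by
  have hb : 0 ≤ b := by linarith
  calc coneScale t * b + coneError t B₀ C₀
      ≤ 3 / 2 * (1 / √2) * b + 1 / √2 * (B₀ + C₀) := by
        gcongr
        exacts [coneScale_le ht, coneError_le ht hB₀ hC₀]
    _ ≤ 3 / 2 * (1 / √2) * b + 1 / √2 * (b / 8) := by gcongr
    _ = 1 / √2 * (13 / 8 * b) := by ring
    _ ≤ 1 * (13 / 8 * b) := by gcongr; exact one_div_sqrt_two_le_one
    _ ≤ 2 * b := by linarith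

end Estimates

/-- **(From the proof of Proposition 2.12.)** The image under `T` of a moment-curve frame
box is contained in a box in the cone frame `(u,v,w)` at angle `ω`. -/
theorem moment_frame_to_cone_frame
    (t : ℝ) (ht : t ∈ Set.Icc (0:ℝ) 1)
    (ω : ℝ) (hω : ω ∈ Set.Icc (π/4) (π/2))
    (hcos : Real.cos ω = 2 * Real.sqrt 2 * t / (2 + t^2))
    (hsin : Real.sin ω = (2 - t^2) / (2 + t^2))
    (a b B₀ C₀ : ℝ) (ha : 0 < a) (hab : a ≤ b) (hB₀ : 0 < B₀) (hC₀ : 0 < C₀)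
    (hsum : B₀ + C₀ ≤ a / 8) :
    Tmap '' {ξ | ∃ A B C : ℝ, a ≤ |A| ∧ |A| ≤ b ∧ |B| ≤ B₀ ∧ |C| ≤ C₀ ∧
                 ξ = A • momD1 t + B • momD2 t + C • momD3} ⊆
      {ξ | ∃ A' B' C' : ℝ, a/2 ≤ |A'| ∧ |A'| ≤ 2*b ∧ |B'| ≤ B₀ + C₀ ∧ |C'| ≤ C₀ ∧
           ξ = A' • ![Real.cos ω, Real.sin ω, 1] + B' • ![Real.sin ω, -Real.cos ω, 0]
               + C' • ![Real.cos ω, Real.sin ω, -1]} := by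
  have ht_abs : |t| ≤ 1 := abs_le.2 ⟨by linarith [ht.1], ht.2⟩
  have hv : |t| / (√2 * coneScale t) * C₀ ≤ C₀ :=
    mul_le_of_le_one_left hC₀.le (abs_div_sqrt_two_mul_coneScale_le_one t)
  have hw : 1 / (2 * coneScale t) * C₀ ≤ C₀ :=
    mul_le_of_le_one_left hC₀.le ((one_div_two_mul_coneScale_le t).trans one_div_sqrt_two_le_one)
  exact (moment_frame_to_cone_frame_general hcos hsin a b B₀ C₀).trans <| frameBox_mono
    (half_le_coneScale_mul_sub_coneError ht_abs hB₀.le hC₀.le hsum)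
    (coneScale_mul_add_coneError_le ht_abs hB₀.le hC₀.le (by linarith)) (by gcongr) hw
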